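/- Let B = ⊕_{m≥0} B_m be an approximable graded algebra over a field k. Then there exists a ∈ ℕ* such that for every sufficiently large integer p, the Krull dimension of the subalgebra ⟨B_p⟩ equals a; moreover, setting d(B) = a − 1, the sequence (dim_k(B_n) / n^{d(B)})_{n≥1} converges in ℝ≥0. -/

import Mathlib

open Filter

/-- A graded algebra over a field `k`, presented as a family of `k`-subspaces
`ℬ m` of a commutative domain `A` (the pieces of the grading), is *approximable* if:
(0) `ℬ 0 = k` and the family is multiplicative (so `⊕ ℬ m` is a graded algebra,
    which is an integral domain since `A` is);
(1) every graded piece is finite dimensional over `k`;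
(2) `ℬ m ≠ 0` for all sufficiently large `m`;
(3) for every `ε > 0` there is `p₀` such that for all `p ≥ p₀`,
    `liminf_n dim (S^n(ℬ p)) / dim (ℬ (n p)) > 1 - ε`, where `S^n(ℬ p) = (ℬ p)^n`
    is the image of `Sym^n (ℬ p) → ℬ (n p)`. -/
def IsApproximable (k : Type*) {A : Type*} [Field k] [CommRing A] [IsDomain A]
    [Algebra k A] (ℬ : ℕ → Submodule k A) : Prop :=
  ℬ 0 = 1 ∧
  (∀ m n : ℕ, ℬ m * ℬ n ≤ ℬ (m + n)) ∧
  (∀ m : ℕ, FiniteDimensional k (ℬ m)) ∧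
  (∀ᶠ m in atTop, ℬ m ≠ ⊥) ∧
  (∀ ε : ℝ, 0 < ε → ∃ p₀ : ℕ, ∀ p ≥ p₀,
    1 - ε < liminf (fun n : ℕ =>
      (Module.finrank k ((ℬ p) ^ n : Submodule k A) : ℝ) /
        (Module.finrank k (ℬ (n * p)) : ℝ)) atTop)

/-!
Choose a basis `x` of `B_p`. The dimension of `S^n(B_p)` counts the exponents of degree `n` of the
standard monomials in `x`, those which are not combinations of smaller monomials. These exponents
form a lower set `L` of `ℕ^s`, and slicing `L` along a coordinate shows, by well-founded induction
on lower sets (Dickson's lemma), that its Hilbert series has denominator `(1 - X) ^ d`, where `d`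
bounds the dimensions of the coordinate faces of `L`. The variables of such a face are algebraically
independent, so `d` may be taken to be the transcendence degree `a_p` of `⟨B_p⟩`, which is also its
Krull dimension. A transcendence basis chosen inside `B_p` gives the matching lower bound, whence
`dim S^n(B_p) ∼ l * n ^ (a_p - 1)` with `l > 0`.

If `dim B_{np} ≤ C * dim S^n(B_p)` for large `n`, comparing growth rates in common degrees shows
that `a_p` is the largest of all the `a_q`; multiplication by a nonzero element of `B_{q-p}` shows
that it is attained by all large `q`. Finally `n ↦ dim B_n` is almost monotone, by multiplication
again, so `dim B_n / n ^ (a - 1)` is pinched between two sequences whose limits have ratio `C`, for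
every `C > 1`.
-/

section KrullDimension

theorem ringKrullDim_eq_of_isIntegral (R S : Type*) [CommRing R] [CommRing S] [Algebra R S]
    [Algebra.IsIntegral R S] [FaithfulSMul R S] :
    ringKrullDim S = ringKrullDim R := by
  apply le_antisymm
  · exact Order.krullDim_le_of_strictMono (PrimeSpectrum.comap (algebraMap R S)) fun I J hIJ ↦
      Ideal.IsIntegral.comap_lt_comap (R := R) (I := I.asIdeal) (J := J.asIdeal) hIJ
  · refine iSup_le fun chain ↦ ?_
    obtain ⟨Q, _, _⟩ := Ideal.nonempty_primesOver (S := S) chain.head.asIdeal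
    obtain ⟨lift, hlength, -⟩ := Ideal.exists_ltSeries_of_hasGoingUp (S := S) chain Q
    exact hlength ▸ Order.LTSeries.length_le_krullDim lift

theorem ringKrullDim_eq_toNat_trdeg (k R : Type*) [Field k] [CommRing R] [IsDomain R]
    [Algebra k R] [Algebra.FiniteType k R] :
    ringKrullDim R = (Algebra.trdeg k R).toNat := by
  obtain ⟨s, φ, hinj, hint⟩ := exists_integral_inj_algHom_of_fg k R
  algebraize [φ.toRingHom]
  have : FaithfulSMul (MvPolynomial (Fin s) k) R :=
    (faithfulSMul_iff_algebraMap_injective _ _).mpr hinj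
  have : IsScalarTower k (MvPolynomial (Fin s) k) R := .of_algHom φ
  have htrdeg := lift_trdeg_add_eq k (MvPolynomial (Fin s) k) R
  rw [MvPolynomial.trdeg_of_isDomain, trdeg_eq_zero] at htrdeg
  rw [ringKrullDim_eq_of_isIntegral (MvPolynomial (Fin s) k) R,
    MvPolynomial.ringKrullDim_of_isNoetherianRing, ringKrullDim_eq_zero_of_field,
    ← Cardinal.toNat_lift, ← htrdeg]
  simp

end KrullDimension

section Growth

/-- `u n ∼ l * n ^ b` as `n → ∞`, in the sense that `u n / n ^ b` tends to `l`; the leading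
coefficient `l` may vanish. -/
def HasGrowth (u : ℕ → ℝ) (b : ℕ) (l : ℝ) : Prop :=
  Tendsto (fun n ↦ u n / (n : ℝ) ^ b) atTop (nhds l)

variable {u v : ℕ → ℝ} {b c : ℕ} {l m : ℝ}

theorem HasGrowth.const_mul (hu : HasGrowth u b l) (C : ℝ) :
    HasGrowth (fun n ↦ C * u n) b (C * l) := by
  simpa only [HasGrowth, mul_div_assoc] using Tendsto.const_mul C hu

theorem HasGrowth.le_of_le (hu : HasGrowth u b l) (hv : HasGrowth v b m) (huv : u ≤ᶠ[atTop] v) :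
    l ≤ m :=
  le_of_tendsto_of_tendsto hu hv (huv.mono fun n hn ↦ div_le_div_of_nonneg_right hn (by positivity))

theorem HasGrowth.zero_of_lt (hu : HasGrowth u b l) (hbc : b < c) : HasGrowth u c 0 := by
  have hinv : Tendsto (fun n : ℕ ↦ ((n : ℝ) ^ (c - b))⁻¹) atTop (nhds 0) :=
    tendsto_inv_atTop_zero.comp
      ((tendsto_pow_atTop (Nat.sub_ne_zero_of_lt hbc)).comp tendsto_natCast_atTop_atTop)
  have hprod := Tendsto.mul hu hinv
  rw [mul_zero] at hprod
  refine hprod.congr fun n ↦ ?_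
  rw [← div_eq_mul_inv, div_div, ← pow_add, Nat.add_sub_cancel' hbc.le]

theorem HasGrowth.exponent_le_of_le (hu : HasGrowth u b l) (hl : 0 < l) (hv : HasGrowth v c m)
    (huv : u ≤ᶠ[atTop] v) : b ≤ c := by
  by_contra! hcb
  exact hl.not_ge (hu.le_of_le (hv.zero_of_lt hcb) huv)

theorem HasGrowth.comp (hu : HasGrowth u b l) {q : ℕ → ℕ} {c : ℝ} (hq : Tendsto q atTop atTop)
    (hqc : Tendsto (fun n ↦ (q n : ℝ) / n) atTop (nhds c)) :
    HasGrowth (fun n ↦ u (q n)) b (l * c ^ b) := by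
  refine ((Tendsto.comp hu hq).mul (hqc.pow b)).congr' ?_
  filter_upwards [hq.eventually_ge_atTop 1] with n hn
  have : (q n : ℝ) ≠ 0 := by positivity
  simp only [Function.comp_apply]
  rw [div_pow, div_mul_div_cancel₀ (pow_ne_zero b this)]

theorem HasGrowth.comp_mul_right (hu : HasGrowth u b l) {p : ℕ} (hp : 0 < p) :
    HasGrowth (fun n ↦ u (n * p)) b (l * p ^ b) := by
  refine hu.comp (tendsto_id.atTop_mul_const' hp) (tendsto_const_nhds.congr' ?_)
  filter_upwards [eventually_gt_atTop 0] with n hn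
  push_cast
  field_simp

theorem tendsto_atTop_of_le_mul_add {q : ℕ → ℕ} {p D : ℕ} (hp : 0 < p)
    (hq : ∀ n, n ≤ q n * p + D) : Tendsto q atTop atTop := by
  refine tendsto_atTop.mpr fun N ↦ (eventually_ge_atTop (N * p + D)).mono fun n hn ↦ ?_
  exact Nat.le_of_mul_le_mul_right (by have := hq n; omega) hp

theorem HasGrowth.comp_of_mul_near (hu : HasGrowth u b l) {q : ℕ → ℕ} {p D : ℕ} (hp : 0 < p)
    (hle : ∀ n, q n * p ≤ n + D) (hge : ∀ n, n ≤ q n * p + D) :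
    HasGrowth (fun n ↦ u (q n)) b (l * (p : ℝ)⁻¹ ^ b) := by
  have hlower (n : ℕ) : -(D : ℝ) ≤ q n * p - n := by
    have : (n : ℝ) ≤ q n * p + D := mod_cast hge n
    linarith
  have hupper (n : ℕ) : (q n : ℝ) * p - n ≤ D := by
    have : (q n : ℝ) * p ≤ n + D := mod_cast hle n
    linarith
  have herr : Tendsto (fun n : ℕ ↦ ((q n : ℝ) * p - n) / n) atTop (nhds 0) :=
    tendsto_bdd_div_atTop_nhds_zero (.of_forall hlower) (.of_forall hupper)
      tendsto_natCast_atTop_atTop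
  have hlim := (herr.add_const 1).mul_const (p : ℝ)⁻¹
  rw [zero_add, one_mul] at hlim
  refine hu.comp (tendsto_atTop_of_le_mul_add hp hge) (hlim.congr' ?_)
  filter_upwards [eventually_gt_atTop 0] with n hn
  field_simp
  ring

theorem hasGrowth_eval (P : Polynomial ℝ) (hP : P.natDegree ≤ b) :
    HasGrowth (fun n ↦ P.eval (n : ℝ)) b (P.coeff b) := by
  have hX : (Polynomial.X ^ b : Polynomial ℝ).degree = b := Polynomial.degree_X_pow b
  suffices Tendsto (fun x ↦ P.eval x / (Polynomial.X ^ b).eval x) atTop (nhds (P.coeff b)) by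
    simpa [HasGrowth, Function.comp_def] using this.comp tendsto_natCast_atTop_atTop
  rcases (Polynomial.natDegree_le_iff_degree_le.mp hP).lt_or_eq with hlt | heq
  · rw [Polynomial.coeff_eq_zero_of_degree_lt hlt]
    exact P.div_tendsto_atTop_zero_of_degree_lt _ (hlt.trans_eq hX.symm)
  · simpa [Polynomial.leadingCoeff, Polynomial.natDegree_eq_of_degree_eq_some heq]
      using P.div_tendsto_atTop_leadingCoeff_div_of_degree_eq _ (heq.trans hX.symm)

theorem hasGrowth_choose (b : ℕ) :
    HasGrowth (fun n ↦ ((n + b).choose b : ℝ)) b (b.factorial : ℝ)⁻¹ := by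
  have h := hasGrowth_eval _ (Polynomial.natDegree_preHilbertPoly ℝ b 0).le
  simpa only [Polynomial.coeff_preHilbertPoly_self,
    Polynomial.preHilbertPoly_eq_choose_sub_add ℝ b (Nat.zero_le _), tsub_zero] using h

theorem exists_hasGrowth_coeff_of_mul_one_sub_pow_eq {H : PowerSeries ℝ} {P : Polynomial ℝ}
    (hH : H * (1 - PowerSeries.X) ^ (b + 1) = (P : PowerSeries ℝ)) :
    ∃ l, HasGrowth (fun n ↦ H.coeff n) b l := by
  have hcoeff : (P : PowerSeries ℝ) * PowerSeries.invOneSubPow ℝ (b + 1) = H := by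
    rw [← hH, ← PowerSeries.invOneSubPow_inv_eq_one_sub_pow, mul_assoc,
      Units.inv_val, mul_one]
  have hdeg : (P.hilbertPoly (b + 1)).natDegree ≤ b := by
    rw [Polynomial.hilbertPoly_succ]
    exact Polynomial.natDegree_sum_le_of_forall_le _ _ fun i _ ↦
      (Polynomial.natDegree_smul_le _ _).trans (Polynomial.natDegree_preHilbertPoly ℝ b i).le
  refine ⟨_, (hasGrowth_eval _ hdeg).congr' ?_⟩
  filter_upwards [eventually_gt_atTop P.natDegree] with n hn
  rw [← Polynomial.coeff_mul_invOneSubPow_eq_hilbertPoly_eval _ hn, hcoeff]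

theorem exists_tendsto_of_pinched
    (hu : ∀ C > 1, ∃ c > 0, ∃ lo hi : ℕ → ℝ, Tendsto lo atTop (nhds c) ∧
      Tendsto hi atTop (nhds (c * C)) ∧ lo ≤ᶠ[atTop] u ∧ u ≤ᶠ[atTop] hi) :
    ∃ L > 0, Tendsto u atTop (nhds L) := by
  obtain ⟨_, _, lo₀, hi₀, hlo₀, hhi₀, hlou₀, huhi₀⟩ := hu 2 one_lt_two
  have hbelow : atTop.IsBoundedUnder (· ≥ ·) u := hlo₀.isBoundedUnder_ge.mono_ge hlou₀
  have habove : atTop.IsBoundedUnder (· ≤ ·) u := hhi₀.isBoundedUnder_le.mono_le huhi₀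
  have hbounds (C : ℝ) (hC : 1 < C) :
      ∃ c > 0, c ≤ liminf u atTop ∧ limsup u atTop ≤ c * C := by
    obtain ⟨c, hc, lo, hi, hlo, hhi, hlou, huhi⟩ := hu C hC
    refine ⟨c, hc, ?_, ?_⟩
    · exact hlo.liminf_eq ▸
        liminf_le_liminf hlou hlo.isBoundedUnder_ge habove.isCoboundedUnder_ge
    · exact hhi.limsup_eq ▸
        limsup_le_limsup huhi hbelow.isCoboundedUnder_le hhi.isBoundedUnder_le
  obtain ⟨c, hc, hc_le, -⟩ := hbounds 2 one_lt_two
  have hpos : 0 < liminf u atTop := hc.trans_le hc_le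
  refine ⟨_, hpos, tendsto_of_le_liminf_of_limsup_le le_rfl ?_ habove hbelow⟩
  refine (le_iff_forall_one_lt_le_mul₀ hpos.le).mpr fun C hC ↦ ?_
  obtain ⟨c, -, hc_le, hle_c⟩ := hbounds C hC
  exact hle_c.trans (by gcongr)

theorem exists_hasGrowth_of_pinched_on_multiples {m₀ : ℕ} (hu : ∀ m n, m + m₀ ≤ n → u m ≤ u n)
    (hpinch : ∀ C > 1, ∃ p > 0, ∃ l > 0, ∃ v : ℕ → ℝ, HasGrowth v b l ∧
      (∀ n, v n ≤ u (n * p)) ∧ ∀ᶠ n in atTop, u (n * p) ≤ C * v n) :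
    ∃ L > 0, HasGrowth u b L := by
  refine exists_tendsto_of_pinched fun C hC ↦ ?_
  obtain ⟨p, hp, l, hl, v, hv, hvu, huv⟩ := hpinch C hC
  let below (n : ℕ) : ℕ := (n - m₀) / p
  let above (n : ℕ) : ℕ := (n + m₀) / p + 1
  have hbelow_le (n : ℕ) : below n * p ≤ n - m₀ := Nat.div_mul_le_self _ p
  have hle_below (n : ℕ) : n ≤ below n * p + (m₀ + p) := by
    have := Nat.lt_div_mul_add (a := n - m₀) hp
    lia
  have habove_le (n : ℕ) : above n * p ≤ n + (m₀ + p) := by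
    have := Nat.div_mul_le_self (n + m₀) p
    rw [Nat.succ_mul]
    lia
  have hle_above (n : ℕ) : n + m₀ ≤ above n * p :=
    (Nat.lt_div_mul_add hp).le.trans_eq (Nat.succ_mul _ p).symm
  have hgrowth_below : HasGrowth (fun n ↦ v (below n)) b (l * (p : ℝ)⁻¹ ^ b) :=
    hv.comp_of_mul_near hp (fun n ↦ (hbelow_le n).trans (by lia)) hle_below
  have hgrowth_above : HasGrowth (fun n ↦ v (above n)) b (l * (p : ℝ)⁻¹ ^ b) :=
    hv.comp_of_mul_near hp habove_le fun n ↦ by have := hle_above n; lia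
  refine ⟨l * (p : ℝ)⁻¹ ^ b, by positivity, _, _, hgrowth_below,
    mul_comm C (l * _) ▸ hgrowth_above.const_mul C, ?_, ?_⟩
  · filter_upwards [eventually_ge_atTop m₀] with n hn
    gcongr
    exact (hvu _).trans (hu _ _ (by have := hbelow_le n; lia))
  · have habove : Tendsto above atTop atTop :=
      tendsto_atTop_of_le_mul_add hp (D := 0) fun n ↦ (Nat.le_add_right _ _).trans (hle_above n)
    filter_upwards [habove.eventually huv] with n hn
    gcongr
    exact (hu _ _ (hle_above n)).trans hn

end Growth

section LowerSets

instance wellFoundedLT_lowerSet (α : Type*) [Preorder α] [WellQuasiOrderedLE α] :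
    WellFoundedLT (LowerSet α) := by
  refine ⟨wellFounded_iff_isEmpty_descending_chain.mpr ⟨fun ⟨L, hL⟩ ↦ ?_⟩⟩
  choose a ha_mem ha_notMem using fun n ↦
    Set.exists_of_ssubset (LowerSet.coe_ssubset_coe.mpr (hL n))
  obtain ⟨i, j, hij, hle⟩ := wellQuasiOrdered_le a
  have hchain : L j ≤ L (i + 1) := antitone_nat_of_succ_le (fun n ↦ (hL n).le) hij
  exact ha_notMem i ((L (i + 1)).lower hle (hchain (ha_mem j)))

variable {σ : Type*}

/-- The Hilbert series of a set of exponents: the generating function of the number of its elements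
of each total degree. -/
noncomputable def degreeSeries (L : Set (σ →₀ ℕ)) : PowerSeries ℝ :=
  .mk fun n ↦ ({m ∈ L | m.degree = n}.ncard : ℝ)

theorem finite_setOf_mem_degree_eq [Finite σ] (L : Set (σ →₀ ℕ)) (n : ℕ) :
    {m ∈ L | m.degree = n}.Finite :=
  (Finsupp.finite_of_degree_eq n).subset fun _ hm ↦ hm.2

theorem degreeSeries_eq_add_X_mul [Finite σ] (L : Set (σ →₀ ℕ)) (i : σ) :
    degreeSeries L = degreeSeries {m ∈ L | m i = 0} +
      PowerSeries.X * degreeSeries {m | m + .single i 1 ∈ L} := by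
  ext n
  have hsplit : {m ∈ L | m.degree = n} = {m ∈ {m ∈ L | m i = 0} | m.degree = n} ∪
      (· + .single i 1) '' {m | m + .single i 1 ∈ L ∧ m.degree + 1 = n} := by
    ext m
    refine ⟨fun ⟨hmL, hmn⟩ ↦ ?_, ?_⟩
    · rcases Nat.eq_zero_or_pos (m i) with hmi | hmi
      · exact .inl ⟨⟨hmL, hmi⟩, hmn⟩
      · have hle : .single i 1 ≤ m := Finsupp.single_le_iff.mpr hmi
        obtain ⟨m, rfl⟩ := le_iff_exists_add'.mp hle
        exact .inr ⟨m, ⟨hmL, by rwa [map_add, Finsupp.degree_single] at hmn⟩, rfl⟩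
    · rintro (⟨⟨hmL, -⟩, hmn⟩ | ⟨m, ⟨hmL, hmn⟩, rfl⟩)
      · exact ⟨hmL, hmn⟩
      · exact ⟨hmL, by rwa [map_add, Finsupp.degree_single]⟩
  have hdisj : Disjoint {m ∈ {m ∈ L | m i = 0} | m.degree = n}
      ((· + .single i 1) '' {m | m + .single i 1 ∈ L ∧ m.degree + 1 = n}) := by
    rw [Set.disjoint_left]
    rintro _ ⟨⟨-, hm⟩, -⟩ ⟨m, -, rfl⟩
    simp at hm
  have hfin : {m | m + .single i 1 ∈ L ∧ m.degree + 1 = n}.Finite :=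
    (Finsupp.finite_of_degree_le n).subset fun m hm ↦ (Nat.le_succ _).trans hm.2.le
  rw [degreeSeries, PowerSeries.coeff_mk, hsplit, Set.ncard_union_eq hdisj
    (finite_setOf_mem_degree_eq _ n) (hfin.image _),
    Set.ncard_image_of_injective _ (add_left_injective _), map_add, degreeSeries,
    PowerSeries.coeff_mk, Nat.cast_add]
  congr 1
  cases n with
  | zero => simp
  | succ n => simp [degreeSeries]

/-- Each coordinate face `{m | m.support ⊆ T}` contained in `L` has dimension at most `d`. -/
def FacesBounded (L : Set (σ →₀ ℕ)) (d : ℕ) : Prop :=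
  ∀ T : Finset σ, {m : σ →₀ ℕ | m.support ⊆ T} ⊆ L → T.card ≤ d

theorem FacesBounded.card_add_one_le {L : Set (σ →₀ ℕ)} {d : ℕ} (hL : FacesBounded L d) {i : σ}
    (hadd : ∀ m ∈ L, m + .single i 1 ∈ L) {T : Finset σ}
    (hT : {m : σ →₀ ℕ | m.support ⊆ T} ⊆ {m ∈ L | m i = 0}) : T.card + 1 ≤ d := by
  classical
  have hi : i ∉ T := fun hi ↦ by
    have : (Finsupp.single i 1 : σ →₀ ℕ) ∈ {m ∈ L | m i = 0} :=
      hT (Finsupp.support_single_subset.trans (Finset.singleton_subset_iff.mpr hi))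
    simpa using this.2
  have hadd_single (m : σ →₀ ℕ) (hm : m ∈ L) (j : ℕ) : m + .single i j ∈ L := by
    induction j with
    | zero => simpa
    | succ j ih => rw [Finsupp.single_add, ← add_assoc]; exact hadd _ ih
  rw [← Finset.card_insert_of_notMem hi]
  refine hL _ fun m hm ↦ ?_
  rw [← Finsupp.erase_add_single i m]
  refine hadd_single _ (hT ?_).1 _
  rw [Set.mem_ofPred_eq, Finsupp.support_erase]
  exact Finset.subset_insert_iff.mp hm

theorem degreeSeries_eq_C_of_forall_eq_zero {L : Set (σ →₀ ℕ)} (hL : ∀ m ∈ L, m = 0) :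
    degreeSeries L = .C ((degreeSeries L).coeff 0) := by
  ext n
  rw [PowerSeries.coeff_C]
  split_ifs with hn
  · rw [hn]
  · have hempty : {m ∈ L | m.degree = n} = ∅ :=
      Set.eq_empty_of_forall_notMem fun m ⟨hmL, hmn⟩ ↦ hn (by rw [← hmn, hL m hmL, map_zero])
    rw [degreeSeries, PowerSeries.coeff_mk, hempty, Set.ncard_empty, Nat.cast_zero]

theorem exists_degreeSeries_mul_one_sub_pow_eq [Finite σ] (L : LowerSet (σ →₀ ℕ))
    {d : ℕ} (hL : FacesBounded (L : Set (σ →₀ ℕ)) d) :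
    ∃ P : Polynomial ℝ,
      degreeSeries (L : Set (σ →₀ ℕ)) * (1 - PowerSeries.X) ^ d = (P : PowerSeries ℝ) := by
  induction L using WellFoundedLT.induction generalizing d with | ind L ih =>
  by_cases hzero : ∀ m ∈ L, m = 0
  · refine ⟨.C ((degreeSeries (L : Set (σ →₀ ℕ))).coeff 0) * (1 - .X) ^ d, ?_⟩
    rw [degreeSeries_eq_C_of_forall_eq_zero hzero]
    simp
  push Not at hzero
  obtain ⟨m, hmL, hm⟩ := hzero
  obtain ⟨i, hi⟩ := Finsupp.ne_iff.mp hm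
  let e : σ →₀ ℕ := .single i 1
  have he : e ∈ L := L.lower (Finsupp.single_le_iff.mpr (Nat.one_le_iff_ne_zero.mpr hi)) hmL
  let slice : LowerSet (σ →₀ ℕ) :=
    ⟨{m ∈ L | m i = 0}, fun a b hba ha ↦ ⟨L.lower hba ha.1, Nat.le_zero.mp (ha.2 ▸ hba i)⟩⟩
  let shift : LowerSet (σ →₀ ℕ) :=
    ⟨{m | m + e ∈ L}, fun a b hba ha ↦ L.lower (by gcongr) ha⟩
  have hslice : slice < L := lt_of_le_of_ne (fun m hm ↦ hm.1) fun heq ↦ by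
    have : e ∈ slice := heq ▸ he
    simpa [e] using this.2
  have hshift : shift ≤ L := fun m hm ↦ L.lower le_self_add hm
  have hsum : degreeSeries (L : Set (σ →₀ ℕ)) = degreeSeries (slice : Set (σ →₀ ℕ)) +
    PowerSeries.X * degreeSeries (shift : Set (σ →₀ ℕ)) := degreeSeries_eq_add_X_mul _ i
  rcases hshift.lt_or_eq with hlt | heq
  · obtain ⟨P, hP⟩ := ih slice hslice fun T hT ↦ hL T (hT.trans hslice.le)
    obtain ⟨Q, hQ⟩ := ih shift hlt fun T hT ↦ hL T (hT.trans hshift)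
    exact ⟨P + .X * Q, by rw [hsum, add_mul, mul_assoc, hP, hQ]; simp⟩
  · -- `L` is now a cylinder over `slice`: each face of `slice` extends in the direction `i`, which
    -- pays for the factor `1 - X` put in front of `H_L` by the recursion `H_L = H_slice + X * H_L`.
    have hface {T : Finset σ} (hT : {m : σ →₀ ℕ | m.support ⊆ T} ⊆ slice) : T.card + 1 ≤ d :=
      hL.card_add_one_le (fun m hm ↦ (heq ▸ hm : m ∈ shift)) hT
    have hd : 0 + 1 ≤ d := by
      refine hface (T := ∅) fun m hm ↦ ?_
      rw [Finsupp.support_eq_empty.mp (Finset.subset_empty.mp hm)]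
      exact ⟨L.lower zero_le he, rfl⟩
    obtain ⟨d, rfl⟩ := Nat.exists_eq_add_of_le' hd
    obtain ⟨P, hP⟩ := ih slice hslice fun T hT ↦ Nat.le_of_add_le_add_right (hface hT)
    refine ⟨P, ?_⟩
    rw [heq] at hsum
    rw [← hP, pow_add, mul_comm (_ ^ d), ← mul_assoc]
    linear_combination (1 - PowerSeries.X) ^ d * hsum

end LowerSets

section GreedySet

variable {k ι α M : Type*} [LinearOrder α]

theorem finrank_span_image_eq_ncard [DivisionRing k] [AddCommGroup M] [Module k M] {v : ι → M}
    {s : Set ι} (hs : LinearIndepOn k v s) :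
    Module.finrank k (Submodule.span k (v '' s)) = s.ncard := by
  rw [Module.finrank, rank_span_set hs.id_image, ← hs.injOn.ncard_image]
  rfl

variable (k) in
/-- The indices selected by the greedy algorithm which runs through the vectors `v i` by increasing
`f i` and keeps those outside the span of their predecessors. -/
def greedySet [Semiring k] [AddCommMonoid M] [Module k M] (v : ι → M) (f : ι → α) : Set ι :=
  {i | v i ∉ Submodule.span k (v '' {j | f j < f i})}

theorem linearIndepOn_greedySet [DivisionRing k] [AddCommGroup M] [Module k M] (v : ι → M)
    {f : ι → α} (hf : Function.Injective f) : LinearIndepOn k v (greedySet k v f) := by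
  classical
  refine linearIndepOn_iff_linearIndepOn_finset.mpr fun s hs ↦ ?_
  induction s using Finset.induction_on_max_value f with
  | empty => simp
  | insert a s ha hmax ih =>
    rw [Finset.coe_insert, Set.insert_subset_iff] at hs
    rw [Finset.coe_insert]
    refine (ih hs.2).insert fun hmem ↦ hs.1 (Submodule.span_mono (Set.image_mono ?_) hmem)
    exact fun j hj ↦ (hmax j hj).lt_of_ne (hf.ne (ne_of_mem_of_not_mem hj ha))

end GreedySet

section Graded

variable {k ι κ α A : Type*} [DecidableEq κ] [AddMonoid κ] [CommRing A]

section CommRing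

variable [CommRing k] [Algebra k A] (𝒜 : κ → Submodule k A) [GradedAlgebra 𝒜]

theorem mem_span_of_mem_degree {v : ι → A} {deg : ι → κ} (hv : ∀ i, v i ∈ 𝒜 (deg i)) {a : A} {n : κ}
    (ha : a ∈ 𝒜 n) {s : Set ι} (has : a ∈ Submodule.span k (v '' s)) :
    a ∈ Submodule.span k (v '' {i ∈ s | deg i = n}) := by
  have hproj : GradedAlgebra.proj 𝒜 n a = a := DirectSum.decompose_of_mem_same 𝒜 ha
  have hmap := Submodule.mem_map_of_mem (f := GradedAlgebra.proj 𝒜 n) has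
  rw [hproj, Submodule.map_span] at hmap
  refine Submodule.span_le.mpr ?_ hmap
  rintro _ ⟨_, ⟨i, hi, rfl⟩, rfl⟩
  rw [SetLike.mem_coe, GradedAlgebra.proj_apply]
  by_cases hin : deg i = n
  · rw [DirectSum.decompose_of_mem_same 𝒜 (hin ▸ hv i)]
    exact Submodule.subset_span ⟨i, ⟨hi, hin⟩, rfl⟩
  · rw [DirectSum.decompose_of_mem_ne 𝒜 (hv i) hin]
    exact Submodule.zero_mem _

theorem span_image_degree_eq_span_greedySet [LinearOrder α] [WellFoundedLT α]
    {v : ι → A} {deg : ι → κ} (hv : ∀ i, v i ∈ 𝒜 (deg i)) (f : ι → α) (n : κ) :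
    Submodule.span k (v '' {i | deg i = n}) =
      Submodule.span k (v '' {i ∈ greedySet k v f | deg i = n}) := by
  refine le_antisymm (Submodule.span_le.mpr ?_)
    (Submodule.span_mono (Set.image_mono fun i hi ↦ hi.2))
  rintro _ ⟨i, hi, rfl⟩
  induction i using (InvImage.wf f wellFounded_lt).induction with | _ i ih =>
  by_cases hgreedy : i ∈ greedySet k v f
  · exact Submodule.subset_span ⟨i, ⟨hgreedy, hi⟩, rfl⟩
  · refine Submodule.span_le.mpr ?_
      (mem_span_of_mem_degree 𝒜 hv (hi ▸ hv i) (not_not.mp hgreedy))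
    rintro _ ⟨j, ⟨hji, hj⟩, rfl⟩
    exact ih j hji hj

end CommRing

theorem finrank_span_image_degree_eq [Field k] [Algebra k A] (𝒜 : κ → Submodule k A)
    [GradedAlgebra 𝒜] [LinearOrder α] [WellFoundedLT α]
    {v : ι → A} {deg : ι → κ} (hv : ∀ i, v i ∈ 𝒜 (deg i)) {f : ι → α} (hf : Function.Injective f)
    (n : κ) :
    Module.finrank k (Submodule.span k (v '' {i | deg i = n})) =
      {i ∈ greedySet k v f | deg i = n}.ncard := by
  rw [span_image_degree_eq_span_greedySet 𝒜 hv f,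
    finrank_span_image_eq_ncard ((linearIndepOn_greedySet v hf).mono fun i hi ↦ hi.1)]

end Graded

section Monomials

variable {k σ A : Type*} [CommRing k] [CommRing A] [Algebra k A]

/-- The monomial `x ^ m = ∏ i, x i ^ m i` in a family `x` of ring elements. -/
noncomputable def evalMonomial (x : σ → A) (m : σ →₀ ℕ) : A :=
  m.prod fun i e ↦ x i ^ e

theorem evalMonomial_add (x : σ → A) (m m' : σ →₀ ℕ) :
    evalMonomial x (m + m') = evalMonomial x m * evalMonomial x m' :=
  Finsupp.prod_add_index' (fun _ ↦ pow_zero _) fun _ ↦ pow_add _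

theorem aeval_monomial_one (x : σ → A) (m : σ →₀ ℕ) :
    MvPolynomial.aeval x (MvPolynomial.monomial m (1 : k)) = evalMonomial x m := by
  rw [MvPolynomial.aeval_monomial, map_one, one_mul, evalMonomial]

theorem evalMonomial_mem_degree {𝒜 : ℕ → Submodule k A} [SetLike.GradedMonoid 𝒜] {x : σ → A} {p : ℕ}
    (hx : ∀ i, x i ∈ 𝒜 p) (m : σ →₀ ℕ) : evalMonomial x m ∈ 𝒜 (m.degree * p) := by
  rw [Finsupp.degree_apply, Finset.sum_mul]
  exact SetLike.prod_mem_graded _ _ _ fun i _ ↦ SetLike.pow_mem_graded _ (hx i)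

theorem span_range_pow_eq_span_evalMonomial (x : σ → A) (n : ℕ) :
    Submodule.span k (Set.range x) ^ n =
      Submodule.span k (evalMonomial x '' {m | m.degree = n}) := by
  have hX : Submodule.span k (Set.range x) =
      (MvPolynomial.homogeneousSubmodule σ k 1).map (MvPolynomial.aeval x).toLinearMap := by
    rw [MvPolynomial.homogeneousSubmodule_one_eq_span_X, Submodule.map_span, ← Set.range_comp]
    simp [Function.comp_def]
  rw [hX, ← Submodule.map_pow, MvPolynomial.homogeneousSubmodule_one_pow,
    MvPolynomial.homogeneousSubmodule_eq_finsupp_supported,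
    AddMonoidAlgebra.supported_eq_span_single, Submodule.map_span, Set.image_image]
  simp only [MvPolynomial.single_eq_monomial, AlgHom.toLinearMap_apply, aeval_monomial_one]

theorem algebraicIndependent_iff_linearIndependent_evalMonomial (x : σ → A) :
    AlgebraicIndependent k x ↔ LinearIndependent k (evalMonomial x) := by
  have h : Finsupp.linearCombination k (evalMonomial x) =
      (MvPolynomial.aeval x : MvPolynomial σ k →ₐ[k] A).toLinearMap ∘ₗ
        (MvPolynomial.basisMonomials σ k).repr.symm.toLinearMap := by
    ext m
    simp [aeval_monomial_one]
  rw [LinearIndependent, h, AlgebraicIndependent, LinearMap.coe_comp]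
  exact (Function.Injective.of_comp_iff' _ (LinearEquiv.bijective _)).symm

theorem algebraicIndependent_of_linearIndepOn_evalMonomial {x : σ → A} {T : Set σ}
    (hT : LinearIndepOn k (evalMonomial x) {m | (m.support : Set σ) ⊆ T}) :
    AlgebraicIndependent k fun i : T ↦ x i := by
  rw [algebraicIndependent_iff_linearIndependent_evalMonomial]
  let incl (m : T →₀ ℕ) : {m : σ →₀ ℕ | (m.support : Set σ) ⊆ T} :=
    ⟨m.embDomain (.subtype _), by simp [Finsupp.support_embDomain]⟩
  have hincl : Function.Injective incl := fun m m' h ↦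
    Finsupp.embDomain_injective _ (congrArg Subtype.val h)
  convert LinearIndependent.comp hT incl hincl using 1
  ext m
  simp [evalMonomial, incl, Finsupp.prod_embDomain]

end Monomials

section StandardMonomials

variable (k : Type*) {σ A : Type*} [Field k] [CommRing A] [Algebra k A]

/-- The exponents of the standard monomials in `x`, those which are not linear combinations of
smaller monomials: the complement of the leading exponents of the relations between the `x i`. -/
noncomputable def standardExponents (mo : MonomialOrder σ) (x : σ → A) : LowerSet (σ →₀ ℕ) where
  carrier := greedySet k (evalMonomial x) mo.toSyn
  lower' := by
    intro m m' hle hm hmem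
    obtain ⟨c, rfl⟩ := exists_add_of_le hle
    refine hm ?_
    rw [evalMonomial_add]
    have hmul := Submodule.mul_mem_mul hmem
      (Submodule.mem_span_singleton_self (R := k) (evalMonomial x c))
    rw [Submodule.span_mul_span, Set.mul_singleton, Set.image_image] at hmul
    refine Submodule.span_mono ?_ hmul
    rintro _ ⟨j, hj, rfl⟩
    refine ⟨j + c, ?_, evalMonomial_add x j c⟩
    simpa using hj

end StandardMonomials

section HilbertFunction

variable {k A : Type*} [Field k] [CommRing A] [Algebra k A]

theorem coeff_degreeSeries_standardExponents {σ : Type*} (𝒜 : ℕ → Submodule k A) [GradedAlgebra 𝒜]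
    (mo : MonomialOrder σ) {x : σ → A} {p : ℕ} (hp : 0 < p) (hx : ∀ i, x i ∈ 𝒜 p) (n : ℕ) :
    (degreeSeries (standardExponents k mo x : Set (σ →₀ ℕ))).coeff n =
      Module.finrank k (Submodule.span k (Set.range x) ^ n : Submodule k A) := by
  have h := finrank_span_image_degree_eq 𝒜 (evalMonomial_mem_degree hx) mo.toSyn.injective (n * p)
  have hdegree : {m : σ →₀ ℕ | m.degree * p = n * p} = {m | m.degree = n} :=
    Set.ext fun m ↦ Nat.mul_left_inj hp.ne'
  simp only [Nat.mul_left_inj hp.ne'] at h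
  rw [hdegree] at h
  rw [span_range_pow_eq_span_evalMonomial, h, degreeSeries, PowerSeries.coeff_mk]
  rfl

theorem facesBounded_standardExponents [IsDomain A] {σ : Type*} [Finite σ] (mo : MonomialOrder σ)
    (x : σ → A) :
    FacesBounded (standardExponents k mo x : Set (σ →₀ ℕ))
      (Algebra.trdeg k (Algebra.adjoin k (Set.range x))).toNat := by
  intro T hT
  have := Algebra.FiniteType.adjoin_of_finite (R := k) (Set.finite_range x)
  have hindep : AlgebraicIndependent k fun i : T ↦ x i :=
    algebraicIndependent_of_linearIndepOn_evalMonomial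
      ((linearIndepOn_greedySet _ mo.toSyn.injective).mono hT)
  have hindep' : AlgebraicIndependent k
      fun i : T ↦ (⟨x i, Algebra.subset_adjoin ⟨i, rfl⟩⟩ : Algebra.adjoin k (Set.range x)) :=
    AlgebraicIndependent.of_comp (Algebra.adjoin k (Set.range x)).val hindep
  have hcard := hindep'.lift_cardinalMk_le_trdeg
  have htrdeg : Algebra.trdeg k (Algebra.adjoin k (Set.range x)) < .aleph0 :=
    trdeg_lt_aleph0_of_finiteType
  simpa using Cardinal.toNat_le_toNat hcard (Cardinal.lift_lt_aleph0.mpr htrdeg)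

theorem exists_subset_algebraicIndependent_mk_eq_trdeg_adjoin [IsDomain A] (s : Set A) :
    ∃ t ⊆ s, AlgebraicIndependent k ((↑) : t → A) ∧
      Cardinal.mk t = Algebra.trdeg k (Algebra.adjoin k s) := by
  let s' : Set (Algebra.adjoin k s) := (↑) ⁻¹' s
  have hadjoin : Algebra.adjoin k s' = ⊤ := Algebra.adjoin_adjoin_coe_preimage
  have : Algebra.IsAlgebraic (Algebra.adjoin k s') (Algebra.adjoin k s) :=
    ⟨fun r ↦ isAlgebraic_algebraMap
      (⟨r, hadjoin ▸ Algebra.mem_top⟩ : Algebra.adjoin k s')⟩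
  obtain ⟨t, hts, ht⟩ := exists_isTranscendenceBasis_subset (R := k) s'
  refine ⟨(↑) '' t, Set.image_subset_iff.mpr hts, ?_, ?_⟩
  · exact (algebraicIndependent_image Subtype.val_injective.injOn).mp
      (ht.1.map' (f := (Algebra.adjoin k s).val) Subtype.val_injective)
  · rw [Cardinal.mk_image_eq Subtype.val_injective, ht.cardinalMk_eq_trdeg]

theorem ncard_setOf_degree_eq (σ : Type*) [Finite σ] (n : ℕ) :
    {m : σ →₀ ℕ | m.degree = n}.ncard = (Nat.card σ).multichoose n := by
  classical
  have := Fintype.ofFinite σ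
  rw [Nat.card_eq_fintype_card, ← Finset.card_univ,
    ← Finset.card_finsuppAntidiag_nat_eq_multichoose, ← Set.ncard_coe_finset]
  congr 1
  ext m
  simp [Finsupp.degree_eq_sum]

theorem finrank_span_range_pow_of_algebraicIndependent {σ : Type*} [Finite σ] {x : σ → A}
    (hx : AlgebraicIndependent k x) (n : ℕ) :
    Module.finrank k (Submodule.span k (Set.range x) ^ n : Submodule k A) =
      (Nat.card σ).multichoose n := by
  rw [span_range_pow_eq_span_evalMonomial, finrank_span_image_eq_ncard, ncard_setOf_degree_eq]
  exact ((algebraicIndependent_iff_linearIndependent_evalMonomial x).mp hx).linearIndepOn _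

instance finiteDimensional_pow (V : Submodule k A) [FiniteDimensional k V] (n : ℕ) :
    FiniteDimensional k (V ^ n : Submodule k A) :=
  Module.Finite.iff_fg.mpr ((Module.Finite.iff_fg.mp ‹_›).pow n)

theorem exists_hasGrowth_finrank_span_range_pow [IsDomain A] {σ : Type*} [Finite σ]
    (𝒜 : ℕ → Submodule k A) [GradedAlgebra 𝒜] {x : σ → A} {p : ℕ} (hp : 0 < p)
    (hx : ∀ i, x i ∈ 𝒜 p) (hne : Submodule.span k (Set.range x) ≠ ⊥) :
    ∃ b : ℕ, (Algebra.trdeg k (Algebra.adjoin k (Set.range x))).toNat = b + 1 ∧ ∃ l, HasGrowth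
      (fun n ↦ Module.finrank k (Submodule.span k (Set.range x) ^ n : Submodule k A)) b l := by
  let _ : LinearOrder σ := IsWellOrder.linearOrder WellOrderingRel
  have := Finite.to_wellFoundedGT (α := σ)
  have hcoeff := coeff_degreeSeries_standardExponents 𝒜 (.lex (σ := σ)) hp hx
  obtain ⟨P, hP⟩ := exists_degreeSeries_mul_one_sub_pow_eq _
    (facesBounded_standardExponents (k := k) (.lex (σ := σ)) x)
  rcases h : (Algebra.trdeg k (Algebra.adjoin k (Set.range x))).toNat with _ | b
  · rw [h, pow_zero, mul_one] at hP
    have hzero := hcoeff (P.natDegree + 1)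
    rw [hP, Polynomial.coeff_coe, Polynomial.coeff_eq_zero_of_natDegree_lt (Nat.lt_succ_self _)]
      at hzero
    have : FiniteDimensional k (Submodule.span k (Set.range x)) :=
      .span_of_finite k (Set.finite_range x)
    exact absurd (Submodule.finrank_eq_zero.mp (Nat.cast_eq_zero.mp hzero.symm))
      (pow_ne_zero _ hne)
  · rw [h] at hP
    refine ⟨b, rfl, ?_⟩
    simpa only [hcoeff] using exists_hasGrowth_coeff_of_mul_one_sub_pow_eq hP

theorem choose_le_finrank_pow_of_trdeg_adjoin [IsDomain A] {V : Submodule k A}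
    [FiniteDimensional k V] {b : ℕ}
    (hb : (Algebra.trdeg k (Algebra.adjoin k (V : Set A))).toNat = b + 1) (n : ℕ) :
    (n + b).choose b ≤ Module.finrank k (V ^ n : Submodule k A) := by
  obtain ⟨t, htV, ht, hcard⟩ :=
    exists_subset_algebraicIndependent_mk_eq_trdeg_adjoin (k := k) (V : Set A)
  have hcard' : Nat.card t = b + 1 := by rw [Nat.card, hcard, hb]
  have : Finite t := Nat.finite_of_card_ne_zero (hcard' ▸ b.succ_ne_zero)
  have hle : Submodule.span k (Set.range ((↑) : t → A)) ≤ V := by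
    rwa [Subtype.range_coe, Submodule.span_le]
  calc (n + b).choose b = (Nat.card t).multichoose n := by
        rw [hcard', Nat.multichoose_eq, add_right_comm, Nat.add_sub_cancel, add_comm b,
          Nat.choose_symm_add]
    _ = Module.finrank k (Submodule.span k (Set.range ((↑) : t → A)) ^ n : Submodule k A) :=
        (finrank_span_range_pow_of_algebraicIndependent ht n).symm
    _ ≤ Module.finrank k (V ^ n : Submodule k A) :=
        Submodule.finrank_mono (pow_le_pow_left' hle n)

theorem exists_ringKrullDim_adjoin_eq_and_hasGrowth_finrank_pow [IsDomain A]
    (𝒜 : ℕ → Submodule k A) [GradedAlgebra 𝒜] {p : ℕ} (hp : 0 < p) [FiniteDimensional k (𝒜 p)]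
    (hne : 𝒜 p ≠ ⊥) :
    ∃ b : ℕ, ringKrullDim (Algebra.adjoin k (𝒜 p : Set A)) = (b + 1 : ℕ) ∧
      ∃ l > 0, HasGrowth (fun n ↦ Module.finrank k (𝒜 p ^ n : Submodule k A)) b l := by
  obtain ⟨s, x, hx⟩ := Submodule.fg_iff_exists_fin_generating_family.mp
    (Module.Finite.iff_fg.mp ‹FiniteDimensional k (𝒜 p)›)
  have hadjoin : Algebra.adjoin k (𝒜 p : Set A) = Algebra.adjoin k (Set.range x) := by
    rw [← hx, Algebra.adjoin_span]
  have : Algebra.FiniteType k (Algebra.adjoin k (𝒜 p : Set A)) :=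
    hadjoin ▸ Algebra.FiniteType.adjoin_of_finite (Set.finite_range x)
  have hxp (i : Fin s) : x i ∈ 𝒜 p := hx ▸ Submodule.subset_span ⟨i, rfl⟩
  obtain ⟨b, hb, l, hl⟩ := exists_hasGrowth_finrank_span_range_pow 𝒜 hp hxp (hx ▸ hne)
  rw [← hadjoin] at hb
  rw [hx] at hl
  refine ⟨b, by rw [ringKrullDim_eq_toNat_trdeg k, hb], l, ?_, hl⟩
  have hle : (b.factorial : ℝ)⁻¹ ≤ l := (hasGrowth_choose b).le_of_le hl
    (.of_forall fun n ↦ Nat.cast_le.mpr (choose_le_finrank_pow_of_trdeg_adjoin hb n))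
  exact hle.trans_lt' (by positivity)

end HilbertFunction

section GradedDimension

variable {k A : Type*} [CommRing A]

theorem pow_le_degree [CommRing k] [Algebra k A] (𝒜 : ℕ → Submodule k A)
    [SetLike.GradedMonoid 𝒜] (p n : ℕ) : 𝒜 p ^ n ≤ 𝒜 (n * p) := by
  induction n with
  | zero =>
    rw [pow_zero, zero_mul, Submodule.one_le]
    exact SetLike.GradedOne.one_mem
  | succ n ih =>
    rw [pow_succ, add_mul, one_mul, Submodule.mul_le]
    exact fun _ ha _ hb ↦ SetLike.mul_mem_graded (ih ha) hb

variable [Field k] [Algebra k A] (𝒜 : ℕ → Submodule k A)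

theorem finrank_le_of_forall_mul_mem [IsDomain A] {V W : Submodule k A} [FiniteDimensional k W]
    {z : A} (hz : z ≠ 0) (h : ∀ a ∈ V, z * a ∈ W) : Module.finrank k V ≤ Module.finrank k W :=
  LinearMap.finrank_le_finrank_of_injective (f := (LinearMap.mulLeft k z).restrict h)
    fun _ _ hab ↦ Subtype.ext (mul_left_cancel₀ hz (congrArg Subtype.val hab))

variable [IsDomain A] [SetLike.GradedMonoid 𝒜] [∀ n, FiniteDimensional k (𝒜 n)] {r : ℕ}

theorem finrank_le_finrank_add (hr : 𝒜 r ≠ ⊥) (n : ℕ) :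
    Module.finrank k (𝒜 n) ≤ Module.finrank k (𝒜 (r + n)) := by
  obtain ⟨z, hzr, hz⟩ := Submodule.exists_mem_ne_zero_of_ne_bot hr
  exact finrank_le_of_forall_mul_mem hz fun _ ha ↦ SetLike.mul_mem_graded hzr ha

theorem finrank_pow_le_finrank_add_pow (hr : 𝒜 r ≠ ⊥) (q n : ℕ) :
    Module.finrank k (𝒜 q ^ n : Submodule k A) ≤
      Module.finrank k (𝒜 (r + q) ^ n : Submodule k A) := by
  obtain ⟨z, hzr, hz⟩ := Submodule.exists_mem_ne_zero_of_ne_bot hr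
  have hmul : 𝒜 r * 𝒜 q ≤ 𝒜 (r + q) :=
    Submodule.mul_le.mpr fun _ ha _ hb ↦ SetLike.mul_mem_graded ha hb
  refine finrank_le_of_forall_mul_mem (pow_ne_zero n hz) fun a ha ↦ ?_
  refine pow_le_pow_left' hmul n ?_
  rw [mul_pow]
  exact Submodule.mul_mem_mul (Submodule.pow_mem_pow _ hzr n) ha

end GradedDimension

section Approximation

variable {k A : Type*} [Field k] [CommRing A] [Algebra k A]

/-- The subalgebra generated by `𝒜 p` approximates the subalgebra of the pieces `𝒜 (n * p)` up to a
factor `C` in dimension, in all large degrees. -/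
def GeneratesUpToFactor (𝒜 : ℕ → Submodule k A) (p : ℕ) (C : ℝ) : Prop :=
  ∀ᶠ n in atTop, (Module.finrank k (𝒜 (n * p)) : ℝ) ≤
    C * Module.finrank k (𝒜 p ^ n : Submodule k A)

theorem eventually_le_mul_of_inv_lt_liminf_div {u v : ℕ → ℝ} {C : ℝ} (hC : 0 < C)
    (hu : ∀ n, 0 ≤ u n) (hv : ∀ n, 0 ≤ v n) (h : C⁻¹ < liminf (fun n ↦ u n / v n) atTop) :
    ∀ᶠ n in atTop, v n ≤ C * u n := by
  have hbdd : atTop.IsBoundedUnder (· ≥ ·) fun n ↦ u n / v n :=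
    isBoundedUnder_of ⟨0, fun n ↦ div_nonneg (hu n) (hv n)⟩
  filter_upwards [eventually_lt_of_lt_liminf h hbdd] with n hn
  have hvn : 0 < v n := (hv n).lt_of_ne' fun h0 ↦ by
    rw [h0, div_zero] at hn
    exact hn.not_ge (by positivity)
  rw [lt_div_iff₀ hvn, inv_mul_lt_iff₀ hC] at hn
  exact hn.le

variable {𝒜 : ℕ → Submodule k A} {p : ℕ} {C : ℝ}

theorem GeneratesUpToFactor.ne_bot [∀ n, FiniteDimensional k (𝒜 n)]
    (hgen : GeneratesUpToFactor 𝒜 p C) (hp : 0 < p) (hne : ∀ᶠ n in atTop, 𝒜 n ≠ ⊥) : 𝒜 p ≠ ⊥ := by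
  intro hbot
  have hmul : Tendsto (fun n ↦ n * p) atTop atTop := tendsto_id.atTop_mul_const' hp
  obtain ⟨n, hn, hn_ne, hn_pos⟩ :=
    (hgen.and ((hmul.eventually hne).and (eventually_gt_atTop 0))).exists
  rw [hbot, ← Submodule.zero_eq_bot, zero_pow hn_pos.ne', Submodule.zero_eq_bot, finrank_bot,
    Nat.cast_zero, mul_zero] at hn
  exact hn_ne (Submodule.finrank_eq_zero.mp (Nat.cast_nonpos.mp hn))

theorem GeneratesUpToFactor.exponent_le [SetLike.GradedMonoid 𝒜]
    [∀ n, FiniteDimensional k (𝒜 n)] (hgen : GeneratesUpToFactor 𝒜 p C) (hp : 0 < p)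
    {q b c : ℕ} {l m : ℝ} (hq : 0 < q) (hl : 0 < l)
    (hqb : HasGrowth (fun n ↦ Module.finrank k (𝒜 q ^ n : Submodule k A)) b l)
    (hpc : HasGrowth (fun n ↦ Module.finrank k (𝒜 p ^ n : Submodule k A)) c m) : b ≤ c := by
  have hmul : Tendsto (fun n ↦ n * q) atTop atTop := tendsto_id.atTop_mul_const' hq
  refine (hqb.comp_mul_right hp).exponent_le_of_le (by positivity)
    ((hpc.comp_mul_right hq).const_mul C) ?_
  filter_upwards [hmul.eventually hgen] with n hn
  refine le_trans (Nat.cast_le.mpr ?_) hn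
  rw [mul_right_comm]
  exact Submodule.finrank_mono (pow_le_degree 𝒜 q (n * p))

theorem exists_hasGrowth_finrank_degree [IsDomain A] [SetLike.GradedMonoid 𝒜]
    [∀ n, FiniteDimensional k (𝒜 n)] (hne : ∀ᶠ n in atTop, 𝒜 n ≠ ⊥) {b : ℕ}
    (hgen : ∀ C > 1, ∃ p > 0, GeneratesUpToFactor 𝒜 p C ∧ ∃ l > 0,
      HasGrowth (fun n ↦ Module.finrank k (𝒜 p ^ n : Submodule k A)) b l) :
    ∃ L > 0, HasGrowth (fun n ↦ Module.finrank k (𝒜 n)) b L := by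
  obtain ⟨m₀, hm₀⟩ := eventually_atTop.mp hne
  refine exists_hasGrowth_of_pinched_on_multiples (m₀ := m₀) (fun m n hmn ↦ ?_) fun C hC ↦ ?_
  · have h := finrank_le_finrank_add 𝒜 (hm₀ (n - m) (by lia)) m
    rw [Nat.sub_add_cancel (by lia)] at h
    exact mod_cast h
  · obtain ⟨p, hp, hgenp, l, hl, hgrowth⟩ := hgen C hC
    exact ⟨p, hp, l, hl, _, hgrowth,
      fun n ↦ Nat.cast_le.mpr (Submodule.finrank_mono (pow_le_degree 𝒜 p n)), hgenp⟩

theorem exists_common_exponent [IsDomain A] [GradedAlgebra 𝒜]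
    [∀ n, FiniteDimensional k (𝒜 n)] (hne : ∀ᶠ n in atTop, 𝒜 n ≠ ⊥)
    (hgen : ∃ p > 0, ∃ C, GeneratesUpToFactor 𝒜 p C) :
    ∃ b : ℕ, (∀ᶠ q in atTop, ringKrullDim (Algebra.adjoin k (𝒜 q : Set A)) = (b + 1 : ℕ)) ∧
      ∀ p > 0, ∀ C, GeneratesUpToFactor 𝒜 p C → ∃ l > 0,
        HasGrowth (fun n ↦ Module.finrank k (𝒜 p ^ n : Submodule k A)) b l := by
  obtain ⟨p₁, hp₁, C₁, hgen₁⟩ := hgen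
  obtain ⟨b, -, l₁, hl₁, hgrowth₁⟩ :=
    exists_ringKrullDim_adjoin_eq_and_hasGrowth_finrank_pow 𝒜 hp₁ (hgen₁.ne_bot hp₁ hne)
  refine ⟨b, ?_, fun p hp C hgen ↦ ?_⟩
  · filter_upwards [hne, (tendsto_sub_atTop_nat p₁).eventually hne, eventually_ge_atTop p₁]
      with q hq_ne hr_ne hle
    have hq : 0 < q := hp₁.trans_le hle
    obtain ⟨c, hdim, l, hl, hgrowth⟩ :=
      exists_ringKrullDim_adjoin_eq_and_hasGrowth_finrank_pow 𝒜 hq hq_ne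
    have hmono (n : ℕ) : Module.finrank k (𝒜 p₁ ^ n : Submodule k A) ≤
        Module.finrank k (𝒜 q ^ n : Submodule k A) := by
      have h := finrank_pow_le_finrank_add_pow 𝒜 hr_ne p₁ n
      rwa [Nat.sub_add_cancel hle] at h
    have hbc : b ≤ c := hgrowth₁.exponent_le_of_le hl₁ hgrowth
      (.of_forall fun n ↦ Nat.cast_le.mpr (hmono n))
    rw [hdim, hbc.antisymm (hgen₁.exponent_le hp₁ hq hl hgrowth hgrowth₁)]
  · obtain ⟨c, -, l, hl, hgrowth⟩ :=
      exists_ringKrullDim_adjoin_eq_and_hasGrowth_finrank_pow 𝒜 hp (hgen.ne_bot hp hne)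
    have hcb : c = b := le_antisymm (hgen₁.exponent_le hp₁ hp hl hgrowth hgrowth₁)
      (hgen.exponent_le hp hp₁ hl₁ hgrowth₁ hgrowth)
    exact ⟨l, hl, hcb ▸ hgrowth⟩

end Approximation

theorem chen_dimension_and_volume_exist_general (k : Type*) {A : Type*} [Field k] [CommRing A]
    [IsDomain A] [Algebra k A] (𝒜 : ℕ → Submodule k A) [GradedAlgebra 𝒜]
    [∀ n, FiniteDimensional k (𝒜 n)] (hne : ∀ᶠ n in atTop, 𝒜 n ≠ ⊥)
    (happrox : ∀ ε : ℝ, 0 < ε → ∃ p > 0, 1 - ε < liminf (fun n : ℕ ↦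
      (Module.finrank k (𝒜 p ^ n : Submodule k A) : ℝ) / Module.finrank k (𝒜 (n * p))) atTop) :
    ∃ a : ℕ, 0 < a ∧
      (∀ᶠ p in atTop, ringKrullDim (Algebra.adjoin k (𝒜 p : Set A)) = a) ∧
      ∃ L : ℝ, 0 < L ∧
        Tendsto (fun n : ℕ ↦ (Module.finrank k (𝒜 n) : ℝ) / (n : ℝ) ^ (a - 1)) atTop (nhds L) := by
  have hgen (C : ℝ) (hC : 1 < C) : ∃ p > 0, GeneratesUpToFactor 𝒜 p C := by
    obtain ⟨p, hp, hlim⟩ := happrox (1 - C⁻¹) (sub_pos.mpr (inv_lt_one_of_one_lt₀ hC))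
    rw [sub_sub_cancel] at hlim
    exact ⟨p, hp, eventually_le_mul_of_inv_lt_liminf_div (zero_lt_one.trans hC)
      (fun _ ↦ Nat.cast_nonneg _) (fun _ ↦ Nat.cast_nonneg _) hlim⟩
  obtain ⟨p₁, hp₁, hgen₁⟩ := hgen 2 one_lt_two
  obtain ⟨b, hdim, hgrowth⟩ := exists_common_exponent hne ⟨p₁, hp₁, 2, hgen₁⟩
  refine ⟨b + 1, b.succ_pos, hdim, exists_hasGrowth_finrank_degree hne fun C hC ↦ ?_⟩
  obtain ⟨p, hp, hgenp⟩ := hgen C hC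
  exact ⟨p, hp, hgenp, hgrowth p hp C hgenp⟩

/-- **Chen's lemma.** Let `B = ⊕ B_m` be an approximable graded algebra over a field `k`.
Then there exists `a ∈ ℕ*` such that for every sufficiently large `p` the Krull dimension
of the subalgebra `⟨B_p⟩` generated by `B_p` equals `a`; moreover, setting `d(B) = a - 1`,
the sequence `dim_k B_n / n^{d(B)}` converges in `ℝ≥0`. -/
theorem chen_dimension_and_volume_exist
    (k : Type*) {A : Type*} [Field k] [CommRing A] [IsDomain A] [Algebra k A]
    (𝒜 : ℕ → Submodule k A) [GradedAlgebra 𝒜]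
    (hB : IsApproximable k 𝒜) :
    ∃ a : ℕ, 0 < a ∧
      (∀ᶠ p in atTop, ringKrullDim (Algebra.adjoin k (𝒜 p : Set A)) = a) ∧
      ∃ L : ℝ, 0 ≤ L ∧
        Tendsto (fun n : ℕ =>
          (Module.finrank k (𝒜 n) : ℝ) / (n : ℝ) ^ (a - 1)) atTop (nhds L) := by
  obtain ⟨-, -, _, hne, happrox⟩ := hB
  obtain ⟨a, ha, hdim, L, hL, hlim⟩ := chen_dimension_and_volume_exist_general k 𝒜 hne fun ε hε ↦
    let ⟨p₀, hp₀⟩ := happrox ε hε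
    ⟨p₀ + 1, p₀.succ_pos, hp₀ _ p₀.le_succ⟩
  exact ⟨a, ha, hdim, L, hL.le, hlim⟩
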